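/- arXiv:1503.05572 — 2 statements merged into one kernel-verified Lean document; each statement's English description precedes it below -/
import Mathlib

section
/- If p is a real polynomial of degree at most n, then sup_{x∈[0,1]} |p(x)| ≤ 2(n+1)² · ∫₀¹ |p(x)| dx. -/
open Polynomial in
theorem aux_antideriv (n : ℕ) (p : Polynomial ℝ) (hp : p.natDegree ≤ n) :
    ∃ F : Polynomial ℝ, derivative F = p ∧ F.natDegree ≤ n + 1 := by
  refine ⟨∑ k ∈ Finset.range (n+1), monomial (k+1) (p.coeff k / (k+1)), ?_, ?_⟩
  · rw [derivative_sum]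
    conv_rhs => rw [p.as_sum_range' (n+1) (by omega)]
    refine Finset.sum_congr rfl fun k _ => ?_
    rw [derivative_monomial]
    have : (k:ℝ) + 1 ≠ 0 := by positivity
    push_cast
    simp [this]
  · refine natDegree_sum_le_of_forall_le _ _ fun k hk => ?_
    refine (natDegree_monomial_le _).trans ?_
    have := Finset.mem_range.1 hk
    omega

open Polynomial in
theorem aux_half (n : ℕ) (p : Polynomial ℝ) (hp : p.natDegree ≤ n) (x : ℝ)
    (hx : 1 / 2 ≤ x) (hx1 : x ≤ 1) :
    p.eval x ≤ 2 * (n + 1) ^ 2 * ∫ y in (0:ℝ)..1, |p.eval y| := by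
  obtain ⟨F, hF, hFd⟩ := aux_antideriv n p hp
  set I := ∫ y in (0:ℝ)..1, |p.eval y| with hI
  have hint : ∀ a b : ℝ, IntervalIntegrable (fun y => p.eval y) MeasureTheory.volume a b :=
    fun a b => p.continuous.intervalIntegrable a b
  have hint' : ∀ a b : ℝ, IntervalIntegrable (fun y => |p.eval y|) MeasureTheory.volume a b :=
    fun a b => p.continuous.abs.intervalIntegrable a b
  have ftc : ∀ a b : ℝ, ∫ y in a..b, p.eval y = F.eval b - F.eval a := by
    intro a b
    apply intervalIntegral.integral_eq_sub_of_hasDerivAt _ (hint a b)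
    intro y _
    rw [← hF]
    exact F.hasDerivAt y
  have hI0 : 0 ≤ I := intervalIntegral.integral_nonneg (by norm_num) fun _ _ => abs_nonneg _
  have hG : ∀ s ∈ Set.Icc 0 x, |F.eval s - (F.eval 0 + F.eval x) / 2| ≤ I / 2 := by
    rintro s ⟨h0, h1⟩
    have e1 := intervalIntegral.abs_integral_le_integral_abs (f := fun y => p.eval y) (μ := MeasureTheory.volume) h0
    have e2 := intervalIntegral.abs_integral_le_integral_abs (f := fun y => p.eval y) (μ := MeasureTheory.volume) h1
    have e3 : 0 ≤ ∫ y in x..1, |p.eval y| :=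
      intervalIntegral.integral_nonneg hx1 fun _ _ => abs_nonneg _
    have e4 := intervalIntegral.integral_add_adjacent_intervals (hint' 0 s) (hint' s x)
    have e5 := intervalIntegral.integral_add_adjacent_intervals (hint' 0 x) (hint' x 1)
    rw [ftc] at e1 e2
    rw [abs_le] at *
    constructor <;> linarith [e1.1, e1.2, e2.1, e2.2]
  have key : ∀ J, I < J → p.eval x ≤ 2 * (n + 1) ^ 2 * J := by
    intro J hJ
    have hJ0 : 0 < J := by linarith
    let P : Polynomial ℝ := C (2 / J) * ((F - C ((F.eval 0 + F.eval x) / 2)).comp (C (x/2) * X + C (x/2)))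
    have hPd : P.degree ≤ ((n+1 : ℕ) : WithBot ℕ) := by
      apply degree_le_of_natDegree_le
      refine (natDegree_C_mul_le _ _).trans (natDegree_comp_le.trans ?_)
      rw [natDegree_sub_C]
      have : (C (x/2) * X + C (x/2)).natDegree ≤ 1 := natDegree_linear_le
      nlinarith
    have hPb : ∀ t ∈ Set.Icc (-1:ℝ) 1, |P.eval t| ≤ 1 := by
      rintro t ⟨h0, h1⟩
      have := hG (x/2*t+x/2) ⟨by nlinarith, by nlinarith⟩
      simp only [P, eval_mul, eval_C, eval_comp, eval_sub, eval_add, eval_X]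
      rw [abs_mul, abs_of_pos (by positivity), div_mul_eq_mul_div, div_le_one hJ0]
      linarith
    have h := Chebyshev.eval_iterate_derivative_le_of_forall_abs_le_one (k := 1) (le_refl (1:ℝ)) hPd hPb
    simp only [Function.iterate_one, Chebyshev.derivative_T_eval_one] at h
    have hd : (derivative P).eval 1 = x * p.eval x / J := by
      simp only [P, derivative_mul, derivative_comp, derivative_sub, hF, derivative_C, derivative_add, derivative_X]
      simp
      field_simp
    rw [hd, div_le_iff₀ hJ0] at h
    push_cast at h
    have : 0 ≤ ((n:ℝ)+1)^2 * J := by positivity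
    by_contra hc
    push Not at hc
    nlinarith
  have hN : (0:ℝ) < 2 * (n+1)^2 := by positivity
  rw [← div_le_iff₀' hN]
  refine le_of_forall_gt_imp_ge_of_dense fun J hJ => ?_
  rw [div_le_iff₀' hN]
  exact key J hJ

open Polynomial in
theorem aux_one (n : ℕ) (p : Polynomial ℝ) (hp : p.natDegree ≤ n) (x : ℝ)
    (hx : 0 ≤ x) (hx1 : x ≤ 1) :
    p.eval x ≤ 2 * (n + 1) ^ 2 * ∫ y in (0:ℝ)..1, |p.eval y| := by
  rcases le_total (1/2) x with h | h
  · exact aux_half n p hp x h hx1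
  · have hd : (p.comp (1 - X)).natDegree ≤ n := by
      refine natDegree_comp_le.trans ?_
      have : (1 - X : Polynomial ℝ).natDegree ≤ 1 := by compute_degree
      nlinarith
    have := aux_half n (p.comp (1 - X)) hd (1 - x) (by linarith) (by linarith)
    simp only [eval_comp, eval_sub, eval_one, eval_X, sub_sub_cancel] at this
    rw [intervalIntegral.integral_comp_sub_left (fun y => |p.eval y|) 1] at this
    simpa using this

theorem stmt_6 (n : ℕ) (p : Polynomial ℝ) (hp : p.natDegree ≤ n) :
    ∀ x ∈ Set.Icc (0:ℝ) 1,
      |p.eval x| ≤ 2 * (n + 1) ^ 2 * ∫ y in (0:ℝ)..1, |p.eval y| := by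
  rintro x ⟨h0, h1⟩
  refine abs_le'.2 ⟨aux_one n p hp x h0 h1, ?_⟩
  simpa using aux_one n (-p) (by simpa using hp) x h0 h1
end

section
/- Let f be a continuous function on [0,1] and let p be a polynomial of degree at most n with ‖p‖₁ ≤ 2‖f‖₁ that is a (ζ/(20(n+2)²))-nearly best approximation to f among such polynomials. Then there exist n+1 points r₁ < r₂ < ⋯ < r_{n+1} in [0,1] with r_{i+1} − r_i ≥ 1/(20(n+2)²n) for each i, and |f(r_i) − p(r_i)| ≤ ζ for each i. -/
open Polynomial in
lemma exists_antideriv (h : ℝ[X]) (n : ℕ) (hh : h.natDegree ≤ n) :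
    ∃ H : ℝ[X], derivative H = h ∧ H.natDegree ≤ n + 1 := by
  refine ⟨∑ i ∈ Finset.range (n+1), C (h.coeff i / (i+1)) * X^(i+1), ?_, ?_⟩
  · rw [derivative_sum]
    conv_rhs => rw [h.as_sum_range' (n+1) (by omega)]
    refine Finset.sum_congr rfl fun i _ => ?_
    rw [derivative_C_mul_X_pow, ← C_mul_X_pow_eq_monomial]
    have : (i:ℝ)+1 ≠ 0 := by positivity
    congr 2
    push_cast
    field_simp
  · refine natDegree_sum_le_of_forall_le _ _ fun i hi => ?_
    refine (natDegree_C_mul_X_pow_le _ _).trans ?_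
    simp at hi; omega

open Polynomial in
lemma markov_end (P : ℝ[X]) (n : ℕ) (hP : P.natDegree ≤ n) (K : ℝ) (hK : 0 < K)
    (hb : ∀ x ∈ Set.Icc (-1:ℝ) 1, |P.eval x| ≤ K) : |(derivative P).eval 1| ≤ n^2 * K := by
  have main : ∀ Q : ℝ[X], Q.natDegree ≤ n → (∀ x ∈ Set.Icc (-1:ℝ) 1, |Q.eval x| ≤ K) →
      (derivative Q).eval 1 ≤ n^2 * K := by
    intro Q hQ hQb
    have := Chebyshev.eval_iterate_derivative_le_of_forall_abs_le_one (n := n) (P := C (1/K) * Q)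
      (k := 1) (x := 1) le_rfl
      (degree_le_of_natDegree_le ((natDegree_C_mul_le _ _).trans hQ)) (by
        intro x hx
        simp only [eval_mul, eval_C, abs_mul, abs_of_pos (one_div_pos.2 hK)]
        have := hQb x hx
        rw [one_div, inv_mul_le_iff₀ hK]; simpa using this)
    have h2 := Chebyshev.iterate_derivative_T_eval_one_recurrence (R := ℝ) n 0
    simp at h2
    simp [h2] at this
    rw [inv_mul_le_iff₀ hK] at this
    linarith
  rw [abs_le]
  have h1 := main P hP hb
  have h2 := main (-P) (by simpa using hP) (by simpa using hb)
  simp at h2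
  constructor <;> linarith

open Polynomial in
lemma nikolskii (h : ℝ[X]) (n : ℕ) (hh : h.natDegree ≤ n) (x₀ : ℝ) (hx₀ : x₀ ∈ Set.Icc (0:ℝ) 1) :
    |h.eval x₀| ≤ 4 * (n+1)^2 * ∫ x in (0:ℝ)..1, |h.eval x| := by
  obtain ⟨H, hH, hHd⟩ := exists_antideriv h n hh
  set I := ∫ x in (0:ℝ)..1, |h.eval x| with hI
  have hI0 : 0 ≤ I := intervalIntegral.integral_nonneg (by norm_num) (fun _ _ => abs_nonneg _)
  have hint : ∀ a b, IntervalIntegrable (fun x => |h.eval x|) MeasureTheory.volume a b := fun a b =>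
    (h.continuous.abs).intervalIntegrable a b
  have hbd : ∀ x ∈ Set.Icc (0:ℝ) 1, |H.eval x - H.eval 0| ≤ I := by
    intro x hx
    have : ∫ y in (0:ℝ)..x, h.eval y = H.eval x - H.eval 0 := by
      apply intervalIntegral.integral_eq_sub_of_hasDerivAt
      · intro y _
        rw [← hH]; exact H.hasDerivAt y
      · exact h.continuous.intervalIntegrable _ _
    rw [← this]
    refine (intervalIntegral.abs_integral_le_integral_abs hx.1).trans ?_
    rw [hI, ← intervalIntegral.integral_add_adjacent_intervals (hint 0 x) (hint x 1)]
    have : 0 ≤ ∫ y in x..1, |h.eval y| :=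
      intervalIntegral.integral_nonneg hx.2 (fun _ _ => abs_nonneg _)
    linarith
  obtain ⟨c, hc, hcm⟩ : ∃ c : ℝ, 1/4 ≤ |c| ∧ ∀ y ∈ Set.Icc (-1:ℝ) 1, c * y + (x₀ - c) ∈ Set.Icc (0:ℝ) 1 := by
    obtain ⟨h0, h1⟩ := hx₀
    rcases le_total (1/2) x₀ with h | h
    · refine ⟨x₀/2, by rw [abs_of_nonneg (by linarith)]; linarith, ?_⟩
      rintro y ⟨hy1, hy2⟩
      constructor <;> nlinarith
    · refine ⟨-((1-x₀)/2), by rw [abs_neg, abs_of_nonneg (by linarith)]; linarith, ?_⟩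
      rintro y ⟨hy1, hy2⟩
      constructor <;> nlinarith
  have key : ∀ K, I < K → |h.eval x₀| ≤ 4 * (n+1)^2 * K := by
    intro K hK
    have := markov_end ((H - C (H.eval 0)).comp (C c * X + C (x₀ - c))) (n+1) (by
      refine natDegree_comp_le.trans ?_
      have h1 : (H - C (H.eval 0)).natDegree ≤ n + 1 := by simpa using hHd
      have h2 := natDegree_linear_le (a := c) (b := x₀ - c)
      nlinarith) K (by linarith) (by
        intro y hy
        simp only [eval_comp, eval_add, eval_mul, eval_C, eval_X, eval_sub]
        exact (hbd _ (hcm y hy)).trans hK.le)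
    simp [derivative_comp, hH, abs_mul] at this
    nlinarith [abs_nonneg (h.eval x₀)]
  have hlim : Filter.Tendsto (fun K : ℝ => 4 * ((n:ℝ)+1)^2 * K) (nhdsWithin I (Set.Ioi I))
      (nhds (4 * ((n:ℝ)+1)^2 * I)) :=
    ((continuous_const.mul continuous_id).tendsto I).mono_left nhdsWithin_le_nhds
  exact ge_of_tendsto hlim (by filter_upwards [self_mem_nhdsWithin] with K hK using key K hK)

lemma const_sign (g : ℝ → ℝ) (T : Set ℝ) (hT : IsPreconnected T) (hg : ContinuousOn g T)
    (h0 : ∀ x ∈ T, g x ≠ 0) : (∀ x ∈ T, 0 ≤ g x) ∨ (∀ x ∈ T, g x ≤ 0) := by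
  by_contra! hc
  obtain ⟨⟨x, hx, hx0⟩, ⟨y, hy, hy0⟩⟩ := hc
  obtain ⟨z, hz, hz0⟩ := hT.intermediate_value hx hy hg ⟨hx0.le, hy0.le⟩
  exact h0 z hz hz0

open Polynomial MeasureTheory in
lemma greedy (g : ℝ → ℝ) (hg : ContinuousOn g (Set.Icc 0 1)) (ζ δ : ℝ) (hζ : 0 < ζ) (hδ : 0 < δ) :
    ∀ (k : ℕ) (a : ℝ), 0 ≤ a →
    (∃ r : Fin (k+1) → ℝ, (∀ i, r i ∈ Set.Icc a 1 ∧ |g (r i)| ≤ ζ) ∧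
      ∀ i : Fin k, r i.succ - r i.castSucc ≥ δ) ∨
    ∃ (A : Set ℝ) (h : ℝ[X]), MeasurableSet A ∧ volume A ≤ ENNReal.ofReal (k * δ) ∧
      h.natDegree ≤ k ∧ h ≠ 0 ∧ ((∀ x ≤ a, 0 ≤ h.eval x) ∨ (∀ x ≤ a, h.eval x ≤ 0)) ∧
      ∀ x ∈ Set.Icc a 1, x ∉ A → ζ < |g x| ∧ 0 ≤ g x * h.eval x := by
  have empt : ∀ (k : ℕ) (a : ℝ), 0 ≤ a → (∀ x ∈ Set.Icc a 1, ζ < |g x|) →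
    ∃ (A : Set ℝ) (h : ℝ[X]), MeasurableSet A ∧ volume A ≤ ENNReal.ofReal (k * δ) ∧
      h.natDegree ≤ k ∧ h ≠ 0 ∧ ((∀ x ≤ a, 0 ≤ h.eval x) ∨ (∀ x ≤ a, h.eval x ≤ 0)) ∧
      ∀ x ∈ Set.Icc a 1, x ∉ A → ζ < |g x| ∧ 0 ≤ g x * h.eval x := by
    intro k a ha hS
    rcases const_sign g (Set.Icc a 1) isPreconnected_Icc
      (hg.mono (Set.Icc_subset_Icc_left ha)) (fun x hx h0 => by
        have := hS x hx; rw [h0] at this; simp at this; linarith) with h | h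
    · refine ⟨∅, 1, MeasurableSet.empty, by simp, by simp, one_ne_zero, Or.inl (by simp), ?_⟩
      intro x hx _
      exact ⟨hS x hx, by simpa using h x hx⟩
    · refine ⟨∅, -1, MeasurableSet.empty, by simp, by simp, by simp, Or.inr (by simp), ?_⟩
      intro x hx _
      exact ⟨hS x hx, by simpa using h x hx⟩
  intro k
  induction k with
  | zero =>
    intro a ha
    by_cases hS : ∀ x ∈ Set.Icc a 1, ζ < |g x|
    · exact Or.inr (empt 0 a ha hS)
    · push Not at hS
      obtain ⟨x, hx, hx2⟩ := hS
      exact Or.inl ⟨fun _ => x, fun _ => ⟨hx, hx2⟩, fun i => i.elim0⟩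
  | succ k ih =>
    intro a ha
    by_cases hS : ∀ x ∈ Set.Icc a 1, ζ < |g x|
    · exact Or.inr (empt (k+1) a ha hS)
    push Not at hS
    have hcomp : IsCompact (Set.Icc a 1 ∩ (fun x => |g x|) ⁻¹' Set.Iic ζ) := by
      refine isCompact_Icc.of_isClosed_subset ?_ Set.inter_subset_left
      exact ((hg.mono (Set.Icc_subset_Icc_left ha)).abs).preimage_isClosed_of_isClosed
        isClosed_Icc isClosed_Iic
    obtain ⟨s, ⟨hs1, hs2⟩, hsmin⟩ := hcomp.exists_isLeast
      (by obtain ⟨x, hx, hx2⟩ := hS; exact ⟨x, hx, hx2⟩)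
    have hs2 : |g s| ≤ ζ := hs2
    have hbelow : ∀ x ∈ Set.Ico a s, ζ < |g x| := by
      intro x hx
      by_contra! hc
      have := hsmin ⟨⟨hx.1, hx.2.le.trans hs1.2⟩, hc⟩
      exact absurd hx.2 (not_lt.2 this)
    rcases ih (s+δ) (by linarith [hs1.1]) with ⟨r, hr, hr2⟩ | ⟨A, h, hA, hAv, hd, h0, hsg, hx⟩
    · left
      refine ⟨Fin.cons s r, ?_, ?_⟩
      · intro i
        refine Fin.cases ?_ (fun j => ?_) i
        · exact ⟨hs1, hs2⟩
        · simp only [Fin.cons_succ]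
          exact ⟨⟨by linarith [(hr j).1.1, hs1.1], (hr j).1.2⟩, (hr j).2⟩
      · intro i
        refine Fin.cases ?_ (fun j => ?_) i
        · simp only [Fin.cons_succ, Fin.castSucc_zero, Fin.cons_zero]
          linarith [(hr 0).1.1]
        · simp only [Fin.cons_succ, ← Fin.succ_castSucc]
          exact hr2 j
    · right
      have hv : volume (Set.Icc s (s+δ) ∪ A) ≤ ENNReal.ofReal ((k+1:ℕ) * δ) := by
        refine (measure_union_le _ _).trans ?_
        rw [Real.volume_Icc]
        refine (add_le_add_right hAv _).trans ?_
        rw [← ENNReal.ofReal_add (by linarith) (by positivity)]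
        apply ENNReal.ofReal_le_ofReal
        push_cast; linarith
      have hm : MeasurableSet (Set.Icc s (s+δ) ∪ A) := measurableSet_Icc.union hA
      have hd2 : ((X - C s) * h).natDegree ≤ k + 1 := by
        rw [natDegree_mul (X_sub_C_ne_zero s) h0, natDegree_X_sub_C]; omega
      have h02 : (X - C s) * h ≠ 0 := mul_ne_zero (X_sub_C_ne_zero s) h0
      have hright : ∀ x ∈ Set.Icc a 1, x ∉ Set.Icc s (s+δ) ∪ A → s ≤ x →
          ζ < |g x| ∧ 0 ≤ g x * h.eval x := by
        intro x hx1 hxn hsx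
        have h1 : x ∉ Set.Icc s (s+δ) := fun h => hxn (Or.inl h)
        have h2 : s + δ < x := by by_contra! hc; exact h1 ⟨hsx, hc⟩
        exact hx x ⟨h2.le, hx1.2⟩ (fun h => hxn (Or.inr h))
      have same : (∀ x ∈ Set.Ico a s, 0 ≤ g x * h.eval x) → ∃ (A : Set ℝ) (h : ℝ[X]), MeasurableSet A ∧ volume A ≤ ENNReal.ofReal ((k+1:ℕ) * δ) ∧
          h.natDegree ≤ k+1 ∧ h ≠ 0 ∧ ((∀ x ≤ a, 0 ≤ h.eval x) ∨ (∀ x ≤ a, h.eval x ≤ 0)) ∧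
          ∀ x ∈ Set.Icc a 1, x ∉ A → ζ < |g x| ∧ 0 ≤ g x * h.eval x := by
        intro hsame
        refine ⟨_, h, hm, hv, by omega, h0, ?_, ?_⟩
        · refine hsg.imp (fun H x hx => H x ?_) (fun H x hx => H x ?_) <;> linarith [hs1.1]
        · intro x hx1 hxn
          rcases le_or_gt s x with hsx | hsx
          · exact hright x hx1 hxn hsx
          · exact ⟨hbelow x ⟨hx1.1, hsx⟩, hsame x ⟨hx1.1, hsx⟩⟩
      have diff : (∀ x ∈ Set.Ico a s, g x * h.eval x ≤ 0) → ∃ (A : Set ℝ) (h : ℝ[X]), MeasurableSet A ∧ volume A ≤ ENNReal.ofReal ((k+1:ℕ) * δ) ∧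
          h.natDegree ≤ k+1 ∧ h ≠ 0 ∧ ((∀ x ≤ a, 0 ≤ h.eval x) ∨ (∀ x ≤ a, h.eval x ≤ 0)) ∧
          ∀ x ∈ Set.Icc a 1, x ∉ A → ζ < |g x| ∧ 0 ≤ g x * h.eval x := by
        intro hdiff
        refine ⟨_, (X - C s) * h, hm, hv, hd2, h02, ?_, ?_⟩
        · simp only [eval_mul, eval_sub, eval_X, eval_C]
          have := hs1.1
          rcases hsg with H | H
          · exact Or.inr fun x hx => mul_nonpos_of_nonpos_of_nonneg (by linarith) (H x (by linarith))
          · exact Or.inl fun x hx => mul_nonneg_of_nonpos_of_nonpos (by linarith) (H x (by linarith))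
        · intro x hx1 hxn
          simp only [eval_mul, eval_sub, eval_X, eval_C]
          rcases le_or_gt s x with hsx | hsx
          · obtain ⟨h1, h2⟩ := hright x hx1 hxn hsx
            refine ⟨h1, ?_⟩
            have := mul_nonneg (sub_nonneg.2 hsx) h2
            linarith
          · refine ⟨hbelow x ⟨hx1.1, hsx⟩, ?_⟩
            have := mul_nonneg_of_nonpos_of_nonpos (sub_nonpos.2 hsx.le) (hdiff x ⟨hx1.1, hsx⟩)
            linarith
      rcases const_sign g (Set.Ico a s) isPreconnected_Ico
        (hg.mono (fun x hx => ⟨ha.trans hx.1, hx.2.le.trans hs1.2⟩)) (fun x hx h0 => by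
        have := hbelow x hx; rw [h0] at this; simp at this; linarith) with hgs | hgs <;>
      rcases hsg with H | H
      · exact same fun x hx => mul_nonneg (hgs x hx) (H x (by linarith [hx.2]))
      · exact diff fun x hx => mul_nonpos_of_nonneg_of_nonpos (hgs x hx) (H x (by linarith [hx.2]))
      · exact diff fun x hx => mul_nonpos_of_nonpos_of_nonneg (hgs x hx) (H x (by linarith [hx.2]))
      · exact same fun x hx => mul_nonneg_of_nonpos_of_nonpos (hgs x hx) (H x (by linarith [hx.2]))

open Polynomial MeasureTheory in
lemma improve (g : ℝ → ℝ) (hg : ContinuousOn g (Set.Icc 0 1)) (ζ : ℝ) (hζ : 0 < ζ) (n : ℕ)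
    (A : Set ℝ) (h : ℝ[X]) (hA : MeasurableSet A)
    (hAv : volume A ≤ ENNReal.ofReal (1 / (20 * ((n:ℝ)+2)^2)))
    (hd : h.natDegree ≤ n) (h0 : h ≠ 0)
    (hx : ∀ x ∈ Set.Icc (0:ℝ) 1, x ∉ A → ζ < |g x| ∧ 0 ≤ g x * h.eval x) :
    ∃ q : ℝ[X], q.natDegree ≤ n ∧
      (∫ x in (0:ℝ)..1, |g x - q.eval x|) + ζ / (20 * ((n:ℝ)+2)^2) ≤ ∫ x in (0:ℝ)..1, |g x| := by
  obtain ⟨x₀, hx₀, hmax⟩ := isCompact_Icc.exists_isMaxOn (s := Set.Icc (0:ℝ) 1) ⟨0, by simp⟩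
    (h.continuous.abs.continuousOn)
  set M := |h.eval x₀| with hM
  have hmax : ∀ x ∈ Set.Icc (0:ℝ) 1, |h.eval x| ≤ M := fun x hx => hmax hx
  have hMpos : 0 < M := by
    by_contra! hc
    refine h0 (eq_zero_of_infinite_isRoot h ((Set.Icc_infinite (zero_lt_one' ℝ)).mono ?_))
    intro x hx
    exact abs_nonpos_iff.1 ((hmax x hx).trans hc)
  have hnik := nikolskii h n hd x₀ hx₀
  rw [← hM] at hnik
  set I := ∫ x in (0:ℝ)..1, |h.eval x| with hI
  have hu : Set.uIcc (0:ℝ) 1 = Set.Icc 0 1 := Set.uIcc_of_le zero_le_one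
  have hAfin : volume A ≠ ⊤ := (hAv.trans_lt ENNReal.ofReal_lt_top).ne
  have hAr : volume.real A ≤ 1 / (20 * ((n:ℝ)+2)^2) :=
    ENNReal.toReal_le_of_le_ofReal (by positivity) hAv
  have hind : Integrable (A.indicator fun _ => 2 * ζ) volume :=
    (integrable_indicator_iff hA).2 (integrableOn_const hAfin)
  refine ⟨C (ζ / M) * h, (natDegree_C_mul_le _ _).trans hd, ?_⟩
  have hi1 : IntervalIntegrable (fun x => |g x|) volume 0 1 :=
    ContinuousOn.intervalIntegrable (by rw [hu]; exact hg.abs)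
  have hi2 : IntervalIntegrable (fun x => ζ / M * |h.eval x|) volume 0 1 :=
    (h.continuous.abs.const_mul _).intervalIntegrable 0 1
  have hi3 : IntervalIntegrable (A.indicator fun _ => 2 * ζ) volume 0 1 := hind.intervalIntegrable
  have hle : (∫ x in (0:ℝ)..1, |g x - (C (ζ / M) * h).eval x|) ≤
      ∫ x in (0:ℝ)..1, (|g x| - ζ / M * |h.eval x| + A.indicator (fun _ => 2 * ζ) x) := by
    refine intervalIntegral.integral_mono_on zero_le_one ?_ ((hi1.sub hi2).add hi3) ?_
    · refine ContinuousOn.intervalIntegrable ?_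
      rw [hu]
      exact (hg.sub (C (ζ / M) * h).continuous.continuousOn).abs
    · intro x hx1
      simp only [eval_mul, eval_C]
      have ht : 0 < ζ / M := div_pos hζ hMpos
      have hb : ζ / M * |h.eval x| ≤ ζ := by
        calc ζ / M * |h.eval x| ≤ ζ / M * M := by gcongr; exact hmax x hx1
          _ = ζ := by field_simp
      by_cases hxA : x ∈ A
      · rw [Set.indicator_of_mem hxA]
        have := abs_sub (g x) (ζ / M * h.eval x)
        rw [abs_mul, abs_of_pos ht] at this
        linarith
      · rw [Set.indicator_of_notMem hxA]
        obtain ⟨h1, h2⟩ := hx x hx1 hxA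
        generalize h.eval x = y at *
        generalize g x = z at *
        have hz : z ≠ 0 := by rintro rfl; simp at h1; linarith
        rcases lt_or_gt_of_ne hz with hz | hz
        · have hy : y ≤ 0 := by by_contra! hc; nlinarith
          rw [abs_of_neg hz] at *
          rw [abs_of_nonpos hy] at *
          rw [abs_of_nonpos] <;> linarith
        · have hy : 0 ≤ y := by by_contra! hc; nlinarith
          rw [abs_of_pos hz] at *
          rw [abs_of_nonneg hy] at *
          rw [abs_of_nonneg] <;> linarith
  rw [intervalIntegral.integral_add (hi1.sub hi2) hi3, intervalIntegral.integral_sub hi1 hi2,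
    intervalIntegral.integral_const_mul, ← hI] at hle
  have h3 : (∫ x in (0:ℝ)..1, A.indicator (fun _ => 2 * ζ) x) ≤
      2 * ζ * (1 / (20 * ((n:ℝ)+2)^2)) := by
    rw [intervalIntegral.integral_of_le zero_le_one]
    refine (setIntegral_le_integral hind (Filter.Eventually.of_forall fun x => ?_)).trans ?_
    · exact Set.indicator_nonneg (fun _ _ => by positivity) x
    · rw [integral_indicator_const _ hA, smul_eq_mul, mul_comm]
      gcongr
  have h4 : ζ * (5 * (1 / (20 * ((n:ℝ)+2)^2))) ≤ ζ / M * I := by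
    rw [div_mul_eq_mul_div, mul_div_assoc]
    gcongr
    rw [le_div_iff₀ hMpos]
    have hI0 : 0 ≤ I := intervalIntegral.integral_nonneg (by norm_num) (fun _ _ => abs_nonneg _)
    have : M ≤ 4 * ((n:ℝ)+2)^2 * I := hnik.trans (by gcongr; norm_num)
    calc 5 * (1 / (20 * ((n:ℝ)+2)^2)) * M ≤ 5 * (1 / (20 * ((n:ℝ)+2)^2)) * (4 * ((n:ℝ)+2)^2 * I) := by gcongr
      _ = I := by field_simp; norm_num
  have h5 : 0 < ζ * (1 / (20 * ((n:ℝ)+2)^2)) := by positivity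
  rw [div_eq_mul_one_div ζ (20 * ((n:ℝ)+2)^2)]
  linarith

theorem stmt_7 (f : ℝ → ℝ) (n : ℕ) (ζ : ℝ)
    (hf : ContinuousOn f (Set.Icc 0 1)) (hn : 1 ≤ n) (hζ : 0 < ζ)
    (p : Polynomial ℝ) (hp : p.natDegree ≤ n)
    (hpQ : (∫ x in (0:ℝ)..1, |p.eval x|) ≤ 2 * ∫ x in (0:ℝ)..1, |f x|)
    (hnear : ∀ q : Polynomial ℝ, q.natDegree ≤ n →
      (∫ x in (0:ℝ)..1, |q.eval x|) ≤ 2 * (∫ x in (0:ℝ)..1, |f x|) →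
      (∫ x in (0:ℝ)..1, |f x - p.eval x|) <
        (∫ x in (0:ℝ)..1, |f x - q.eval x|) + ζ / (20 * (n + 2) ^ 2)) :
    ∃ r : Fin (n + 1) → ℝ, StrictMono r ∧ (∀ i, r i ∈ Set.Icc (0:ℝ) 1) ∧
      (∀ i : Fin n, r i.succ - r i.castSucc ≥ 1 / (20 * (n + 2) ^ 2 * n)) ∧
      (∀ i, |f (r i) - p.eval (r i)| ≤ ζ) := by
  have hn0 : (0:ℝ) < n := by exact_mod_cast hn
  have hδ : (0:ℝ) < 1 / (20 * (n + 2) ^ 2 * n) := by positivity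
  have hg : ContinuousOn (fun x => f x - p.eval x) (Set.Icc 0 1) := hf.sub p.continuous.continuousOn
  rcases greedy _ hg ζ _ hζ hδ n 0 le_rfl with ⟨r, hr, hr2⟩ | ⟨A, h, hA, hAv, hd, h0, -, hx⟩
  · refine ⟨r, ?_, fun i => (hr i).1, hr2, fun i => (hr i).2⟩
    rw [Fin.strictMono_iff_lt_succ]
    intro i
    linarith [hr2 i]
  · exfalso
    have e : (n:ℝ) * (1 / (20 * (n + 2) ^ 2 * n)) = 1 / (20 * ((n:ℝ)+2)^2) := by field_simp
    rw [e] at hAv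
    obtain ⟨q, hq, hq2⟩ := improve _ hg ζ hζ n A h hA hAv hd h0 hx
    have hq3 : (∫ x in (0:ℝ)..1, |f x - p.eval x - q.eval x|) =
        ∫ x in (0:ℝ)..1, |f x - (p + q).eval x| := by
      simp [sub_sub]
    rw [hq3] at hq2
    have hdeg : (p + q).natDegree ≤ n := Polynomial.natDegree_add_le_of_degree_le hp hq
    by_cases hc : (∫ x in (0:ℝ)..1, |(p + q).eval x|) ≤ 2 * (∫ x in (0:ℝ)..1, |f x|)
    · linarith [hnear _ hdeg hc]
    · push Not at hc
      have hz := hnear 0 (by simp) (by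
        simp
        exact intervalIntegral.integral_nonneg (by norm_num) (fun _ _ => abs_nonneg _))
      simp only [Polynomial.eval_zero, sub_zero] at hz
      have hu : Set.uIcc (0:ℝ) 1 = Set.Icc 0 1 := Set.uIcc_of_le zero_le_one
      have hi1 : IntervalIntegrable (fun x => |f x|) MeasureTheory.volume 0 1 :=
        ContinuousOn.intervalIntegrable (by rw [hu]; exact hf.abs)
      have hi2 : IntervalIntegrable (fun x => |f x - (p + q).eval x|) MeasureTheory.volume 0 1 :=
        ContinuousOn.intervalIntegrable (by
          rw [hu]; exact (hf.sub (p + q).continuous.continuousOn).abs)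
      have : (∫ x in (0:ℝ)..1, |(p + q).eval x|) ≤
          ∫ x in (0:ℝ)..1, (|f x| + |f x - (p + q).eval x|) := by
        refine intervalIntegral.integral_mono_on zero_le_one
          ((p + q).continuous.abs.intervalIntegrable 0 1) (hi1.add hi2) ?_
        intro x _
        have := abs_sub (f x) (f x - (p + q).eval x)
        simpa using this
      rw [intervalIntegral.integral_add hi1 hi2] at this
      linarith
end
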